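/- Let f be analytic on 𝔻 and suppose there exists γ ∈ ℂ such that f'(z) + ∫₀ᶻ f(ξ) dξ = γ·cos z for all z ∈ 𝔻. Then there exist a, b ∈ ℂ such that f(z) = a·cos z + b·(sin z + z·cos z) for all z ∈ 𝔻; conversely, every f of this form satisfies such an equation. That is, for T = D + V acting on analytic functions on 𝔻 and X = ker T, the optimal domain [T, X] = T⁻¹(ker T) equals span{cos z, sin z + z·cos z}. -/

import Mathlib

open Metric

/-!
If `T f = f' + V f = 0`, then `(u, v) = (f, V f)` solves the harmonic oscillator `u' = -v`,
`v' = u`, so it is obtained from its initial value `(f 0, 0)` by a rotation through the angle `z`;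
hence `ker T` is spanned by `cos`. The forcing term `cos` is resonant: `T` maps the secular function
`sin z + z cos z` to `2 cos z`. Therefore `f ∈ T⁻¹(ker T)` if and only if `f` differs from a
multiple of this function by an element of `ker T`.
-/

open Set Topology

lemma continuousOn_comp_smul_unitInterval {M X : Type*} [AddCommGroup M] [Module ℝ M]
    [TopologicalSpace M] [ContinuousSMul ℝ M] [TopologicalSpace X] {U : Set M} {f : M → X} {z : M}
    (hU : StarConvex ℝ 0 U) (hf : ContinuousOn f U) (hz : z ∈ U) :
    ContinuousOn (fun s : ℝ ↦ f (s • z)) (Icc 0 1) :=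
  hf.comp (by fun_prop) fun _ hs ↦ hU.smul_mem hz hs.1 hs.2

lemma eq_of_hasDerivAt_zero {𝕜 E : Type*} [RCLike 𝕜] [NormedAddCommGroup E] [NormedSpace 𝕜 E]
    {U : Set 𝕜} {u : 𝕜 → E} (hUo : IsOpen U) (hU : IsPreconnected U)
    (hu : ∀ z ∈ U, HasDerivAt u 0 z) {z w : 𝕜} (hz : z ∈ U) (hw : w ∈ U) : u z = u w :=
  hUo.is_const_of_deriv_eq_zero hU (fun x hx ↦ (hu x hx).differentiableAt.differentiableWithinAt)
    (fun x hx ↦ (hu x hx).deriv) hz hw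

section Volterra

variable {𝕜 E : Type*} [RCLike 𝕜] [NormedAddCommGroup E] [NormedSpace 𝕜 E] [NormedSpace ℝ E]
  {U : Set 𝕜} {f g F : 𝕜 → E} {z : 𝕜}

/-- The Volterra operator `V`, integrating `f` from `0` to `z`. The integral is taken along the
segment, parametrized by `[0, 1]`, so it is meaningful on sets that are star-shaped about `0`. -/
noncomputable def volterra (f : 𝕜 → E) (z : 𝕜) : E :=
  z • ∫ s in (0 : ℝ)..1, f (s • z)

/-- The operator `T = D + V`, where `D` is differentiation and `V` the Volterra operator. -/
noncomputable def derivAddVolterra (f : 𝕜 → E) (z : 𝕜) : E :=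
  deriv f z + volterra f z

@[simp]
lemma volterra_zero_right (f : 𝕜 → E) : volterra f 0 = 0 := by
  simp [volterra]

lemma volterra_sub (hU : StarConvex ℝ 0 U) (hf : ContinuousOn f U) (hg : ContinuousOn g U)
    (hz : z ∈ U) : volterra (f - g) z = volterra f z - volterra g z := by
  have intervalIntegrable {h : 𝕜 → E} (hh : ContinuousOn h U) :
      IntervalIntegrable (fun s : ℝ ↦ h (s • z)) MeasureTheory.volume 0 1 :=
    (continuousOn_comp_smul_unitInterval hU hh hz).intervalIntegrable_of_Icc zero_le_one
  simp only [volterra, Pi.sub_apply, ← smul_sub,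
    intervalIntegral.integral_sub (intervalIntegrable hf) (intervalIntegrable hg)]

lemma derivAddVolterra_sub (hU : StarConvex ℝ 0 U) (hUo : IsOpen U) (hf : DifferentiableOn 𝕜 f U)
    (hg : DifferentiableOn 𝕜 g U) (hz : z ∈ U) :
    derivAddVolterra (f - g) z = derivAddVolterra f z - derivAddVolterra g z := by
  have hUz : U ∈ 𝓝 z := hUo.mem_nhds hz
  simp only [derivAddVolterra, deriv_sub (hf.differentiableAt hUz) (hg.differentiableAt hUz),
    volterra_sub hU hf.continuousOn hg.continuousOn hz, add_sub_add_comm]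

variable [IsScalarTower ℝ 𝕜 E] [CompleteSpace E]

lemma volterra_eq_sub (hU : StarConvex ℝ 0 U) (hf : ContinuousOn f U)
    (hF : ∀ w ∈ U, HasDerivAt F (f w) w) (hz : z ∈ U) : volterra f z = F z - F 0 := by
  have hcont := continuousOn_comp_smul_unitInterval hU hf hz
  simpa [volterra] using intervalIntegral.integral_unitInterval_deriv_eq_sub (z₀ := 0) (z₁ := z)
    (by simpa using hcont) fun s hs ↦ by simpa using hF _ (hU.smul_mem hz hs.1 hs.2)

lemma hasDerivAt_volterra (hU : Convex ℝ U) (hUo : IsOpen U) (h0 : 0 ∈ U)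
    (hf : DifferentiableOn 𝕜 f U) (hz : z ∈ U) : HasDerivAt (volterra f) (f z) z := by
  obtain ⟨F, hF⟩ := hU.exists_forall_hasDerivWithinAt hf
  have hF (w : 𝕜) (hw : w ∈ U) : HasDerivAt F (f w) w := (hF w hw).hasDerivAt (hUo.mem_nhds hw)
  refine ((hF z hz).sub_const (F 0)).congr_of_eventuallyEq ?_
  filter_upwards [hUo.mem_nhds hz] with w hw
  exact volterra_eq_sub (hU.starConvex h0) hf.continuousOn hF hw

lemma derivAddVolterra_eq_of_hasDerivAt {f' : E} (hU : StarConvex ℝ 0 U) (hf : ContinuousOn f U)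
    (hF : ∀ w ∈ U, HasDerivAt F (f w) w) (hf' : HasDerivAt f f' z) (hz : z ∈ U) :
    derivAddVolterra f z = f' + (F z - F 0) := by
  rw [derivAddVolterra, hf'.deriv, volterra_eq_sub hU hf hF hz]

end Volterra

section Complex

variable {E : Type*} [NormedAddCommGroup E] [NormedSpace ℂ E] {U : Set ℂ}

lemma eq_cos_smul_sub_sin_smul_of_hasDerivAt {u v : ℂ → E} (hUo : IsOpen U)
    (hU : IsPreconnected U) (h0 : 0 ∈ U) (hu : ∀ z ∈ U, HasDerivAt u (-v z) z)
    (hv : ∀ z ∈ U, HasDerivAt v (u z) z) {z : ℂ} (hz : z ∈ U) :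
    u z = Complex.cos z • u 0 - Complex.sin z • v 0 := by
  have cos_u_add_sin_v : Complex.cos z • u z + Complex.sin z • v z = u 0 := by
    simpa using eq_of_hasDerivAt_zero hUo hU (fun w hw ↦
      (((Complex.hasDerivAt_cos w).smul (hu w hw)).add
        ((Complex.hasDerivAt_sin w).smul (hv w hw))).congr_deriv (by module)) hz h0
  have cos_v_sub_sin_u : Complex.cos z • v z - Complex.sin z • u z = v 0 := by
    simpa using eq_of_hasDerivAt_zero hUo hU (fun w hw ↦
      (((Complex.hasDerivAt_cos w).smul (hv w hw)).sub
        ((Complex.hasDerivAt_sin w).smul (hu w hw))).congr_deriv (by module)) hz h0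
  calc
    u z = (Complex.sin z ^ 2 + Complex.cos z ^ 2) • u z := by
      rw [Complex.sin_sq_add_cos_sq, one_smul]
    _ = Complex.cos z • (Complex.cos z • u z + Complex.sin z • v z) -
        Complex.sin z • (Complex.cos z • v z - Complex.sin z • u z) := by module
    _ = Complex.cos z • u 0 - Complex.sin z • v 0 := by rw [cos_u_add_sin_v, cos_v_sub_sin_u]

lemma hasDerivAt_sin_add_mul_cos (z : ℂ) :
    HasDerivAt (fun z ↦ Complex.sin z + z * Complex.cos z)
      (2 * Complex.cos z - z * Complex.sin z) z :=
  ((Complex.hasDerivAt_sin z).add ((hasDerivAt_id z).mul (Complex.hasDerivAt_cos z))).congr_deriv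
    (by simp only [id_eq]; ring)

lemma hasDerivAt_mul_sin (z : ℂ) :
    HasDerivAt (fun z ↦ z * Complex.sin z) (Complex.sin z + z * Complex.cos z) z :=
  ((hasDerivAt_id z).mul (Complex.hasDerivAt_sin z)).congr_deriv (by simp only [id_eq, one_mul])

lemma differentiable_sin_add_mul_cos_smul (b : E) :
    Differentiable ℂ fun z ↦ (Complex.sin z + z * Complex.cos z) • b :=
  fun z ↦ ((hasDerivAt_sin_add_mul_cos z).smul_const b).differentiableAt

variable [CompleteSpace E] {f : ℂ → E}

lemma derivAddVolterra_sin_add_mul_cos_smul (b : E) (z : ℂ) :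
    derivAddVolterra (fun z ↦ (Complex.sin z + z * Complex.cos z) • b) z =
      (2 * Complex.cos z) • b := by
  rw [derivAddVolterra_eq_of_hasDerivAt (starConvex_univ 0)
    (differentiable_sin_add_mul_cos_smul b).continuous.continuousOn
    (fun w _ ↦ (hasDerivAt_mul_sin w).smul_const b)
    ((hasDerivAt_sin_add_mul_cos z).smul_const b) (mem_univ z)]
  module

theorem derivAddVolterra_eq_zero_iff_exists_eq_cos_smul (hU : Convex ℝ U) (hUo : IsOpen U)
    (h0 : 0 ∈ U) (hf : DifferentiableOn ℂ f U) :
    (∀ z ∈ U, derivAddVolterra f z = 0) ↔ ∃ a : E, ∀ z ∈ U, f z = Complex.cos z • a := by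
  constructor
  · intro hTf
    have hasDerivAt_f (z : ℂ) (hz : z ∈ U) : HasDerivAt f (-volterra f z) z := by
      rw [← eq_neg_of_add_eq_zero_left (hTf z hz)]
      exact (hf.differentiableAt (hUo.mem_nhds hz)).hasDerivAt
    refine ⟨f 0, fun z hz ↦ ?_⟩
    simpa using eq_cos_smul_sub_sin_smul_of_hasDerivAt hUo hU.isPreconnected h0 hasDerivAt_f
      (fun w hw ↦ hasDerivAt_volterra hU hUo h0 hf hw) hz
  · rintro ⟨a, hfa⟩ z hz
    have hasDerivAt_f : HasDerivAt f (-Complex.sin z • a) z :=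
      ((Complex.hasDerivAt_cos z).smul_const a).congr_of_eventuallyEq
        (Filter.eventuallyEq_of_mem (hUo.mem_nhds hz) hfa)
    have hasDerivAt_sin_smul (w : ℂ) (hw : w ∈ U) :
        HasDerivAt (fun z ↦ Complex.sin z • a) (f w) w := by
      rw [hfa w hw]
      exact (Complex.hasDerivAt_sin w).smul_const a
    simp [derivAddVolterra_eq_of_hasDerivAt (hU.starConvex h0) hf.continuousOn
      hasDerivAt_sin_smul hasDerivAt_f hz]

theorem optimalDomain_D_add_V_eq_span_general (hU : Convex ℝ U) (hUo : IsOpen U) (h0 : 0 ∈ U)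
    (hf : DifferentiableOn ℂ f U) :
    (∃ γ : E, ∀ z ∈ U, derivAddVolterra f z = Complex.cos z • γ) ↔
      ∃ a b : E, ∀ z ∈ U,
        f z = Complex.cos z • a + (Complex.sin z + z * Complex.cos z) • b := by
  let resonant (b : E) (z : ℂ) : E := (Complex.sin z + z * Complex.cos z) • b
  have hresonant (b : E) : DifferentiableOn ℂ (resonant b) U :=
    (differentiable_sin_add_mul_cos_smul b).differentiableOn
  have derivAddVolterra_sub_resonant (b : E) {z : ℂ} (hz : z ∈ U) :
      derivAddVolterra (f - resonant b) z = derivAddVolterra f z - Complex.cos z • (2 : ℂ) • b := by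
    rw [derivAddVolterra_sub (hU.starConvex h0) hUo hf (hresonant b) hz,
      derivAddVolterra_sin_add_mul_cos_smul, smul_smul, mul_comm]
  calc
    _ ↔ ∃ b : E, ∀ z ∈ U, derivAddVolterra f z = Complex.cos z • (2 : ℂ) • b :=
      (MulAction.surjective₀ (two_ne_zero' ℂ)).exists
    _ ↔ ∃ b : E, ∀ z ∈ U, derivAddVolterra (f - resonant b) z = 0 := by
      refine exists_congr fun b ↦ forall₂_congr fun z hz ↦ ?_
      rw [derivAddVolterra_sub_resonant b hz, sub_eq_zero]
    _ ↔ ∃ b a : E, ∀ z ∈ U, (f - resonant b) z = Complex.cos z • a :=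
      exists_congr fun b ↦ derivAddVolterra_eq_zero_iff_exists_eq_cos_smul hU hUo h0
        (hf.sub (hresonant b))
    _ ↔ _ := by
      simp only [Pi.sub_apply, sub_eq_iff_eq_add]
      exact exists_comm

end Complex

/-- For analytic `f` on `𝔻`, there exists `γ ∈ ℂ` with
`f'(z) + ∫₀ᶻ f(ξ)dξ = γ·cos z` on `𝔻` iff there exist `a, b ∈ ℂ` with
`f(z) = a·cos z + b·(sin z + z·cos z)` on `𝔻`; i.e. for `T = D + V` the optimal domain
`[T, ker T] = T⁻¹(ker T)` equals `span{cos z, sin z + z·cos z}`. -/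
theorem optimalDomain_D_add_V_eq_span
    (f : ℂ → ℂ) (hf : DifferentiableOn ℂ f (ball (0:ℂ) 1)) :
    (∃ γ : ℂ, ∀ z ∈ ball (0:ℂ) 1,
        deriv f z + z * ∫ s in (0:ℝ)..1, f ((s : ℂ) * z) = γ * Complex.cos z) ↔
      ∃ a b : ℂ, ∀ z ∈ ball (0:ℂ) 1,
        f z = a * Complex.cos z + b * (Complex.sin z + z * Complex.cos z) := by
  simpa only [derivAddVolterra, volterra, Complex.real_smul, smul_eq_mul, mul_comm] using
    optimalDomain_D_add_V_eq_span_general (convex_ball 0 1) isOpen_ball (mem_ball_self one_pos) hf
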